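/- Action of X_n^+ on the Schur basis via horizontal strips: for every partition μ of length l, all m, n ∈ ℤ and i ∈ {0,1}, the following holds in W_i: X_n^+ (s_μ e^{mα}e^{iα/2}) = ( ∑_{j≥0} q^{−2m−n−1−i−2j} · sgn((a_j, μ)) · ∑_λ s_λ ) e^{(m+1)α}e^{iα/2}, where a_j := −2m−n−1−i−j, (a_j,μ) ∈ ℤ^{l+1} is the tuple (a_j, μ₁, …, μ_l), the inner sum is over all partitions λ such that π((a_j,μ)) is a partition and λ − π((a_j,μ)) is a horizontal j-strip, and only finitely many values of j contribute nonzero terms. Equivalently, X_n^+ (s_μ e^{mα}e^{iα/2}) = ∑_{j≥0} q^{−2m−n−1−i−2j} · h_j · s_{(a_j,μ)} · e^{(m+1)α}e^{iα/2}. -/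

import Mathlib

/-!
Why the formula holds. Put `b = -2m-n-1-i` and `H(x) = ∑ h_k x^k`.

*Second formula.* Since `(1+q^{2n})q^{-n} = q^n + q^{-n}`, the creation part of `X⁺(z)` is
`H(qz) H(z/q)` (`HpF_eq`). By Taylor's formula, the annihilation part
`exp(-∑ q^{-n} z^{-n} ∂/∂p_n)` is the translation `p_n ↦ p_n - q^{-n} z^{-n}`
(`DopF_genFamF`, with `t = z⁻¹`), a ring homomorphism that multiplies `H(x)` by `1 - ux` for
`u = t/q` (`map_transl_genSer`). It therefore sends `s_μ` to
`det (h_{μ_i-i+j} - u h_{μ_i-i+j-1})`, which is the expansion of the Jacobi–Trudi determinant of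
`(a, μ)` along its first row with `h_{a+k}` replaced by `u^k` (`det_sub_shift`,
`transl_schurF`). Multiplying by `H(qz)` turns `u^k` back into the entries `h_{a+k}` (Bernstein's
formula), and the remaining factor `H(z/q)` supplies the `h_j` (`Xp_single_schurF`).

*First formula.* It agrees with the second one term by term (`hhF_mul_schurF`). Permuting rows
gives `s_ν = sgn(ν) s_{π(ν)}` (`schurF_straighten`), and `s_π = 0` if the antitone tuple `π` has a
negative entry. For a partition `π` the Pieri rule (`pieri`) is proved with the tail series
`G_k = ∑_b h_{k+b} t^b`, which satisfy `G_k = h_k + t G_{k+1}`. The determinant of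
`G_{π_i-i+c}`, with one zero part appended to `π`, equals `H(t) s_π` by column operations
(`det_tailMat`). Subtracting from each row a multiple of the preceding one removes exactly the
terms violating `λ_{i+1} ≤ π_i`, and what is left is `∑ t^{|λ|-|π|} s_λ` over horizontal strips
(`coeff_det_tailMat`, `det_stripMat`, `hstrip_iff`).
-/

open MvPolynomial

noncomputable section

/-- The base field `F = ℚ(q)`. -/
abbrev Fq : Type := RatFunc ℚ

/-- The indeterminate `q ∈ ℚ(q)`. -/
def qq : Fq := RatFunc.X

/-- `Λ_F = F[p₁,p₂,…]`, with the variable `X n` (for `n : ℕ+`) the power sum `p_n`. -/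
abbrev LamF : Type := MvPolynomial ℕ+ Fq

/-- The power sum `p_n`. -/
def ppF (n : ℕ+) : LamF := X n

/-- The family `g` with generating function `∑_k g_k t^k = exp (∑_{n≥1} c n · p_n tⁿ/n)`,
characterized by `g 0 = 1` and the recursion obtained by differentiating:
`(k+1) · g (k+1) = ∑_{i=0}^{k} c (i+1) · p_{i+1} · g (k−i)`. -/
def genFamF (c : ℕ → Fq) : ℕ → LamF
  | 0 => 1
  | (k+1) => (((k : Fq) + 1)⁻¹) •
      ∑ i ∈ Finset.range (k+1), c (i+1) • (ppF ⟨i+1, Nat.succ_pos i⟩ * genFamF c (k - i))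
  decreasing_by exact Nat.lt_succ_of_le (Nat.sub_le k i)

/-- The complete homogeneous symmetric function `h_k`. -/
def hhF : ℕ → LamF := genFamF fun _ => 1

/-- The elementary symmetric function `e_k`. -/
def eeF : ℕ → LamF := genFamF fun n => (-1)^(n+1)

/-- `h` indexed by `ℤ` (zero in negative degrees). -/
def hZF (n : ℤ) : LamF := if 0 ≤ n then hhF n.toNat else 0

/-- `e` indexed by `ℤ` (zero in negative degrees). -/
def eZF (n : ℤ) : LamF := if 0 ≤ n then eeF n.toNat else 0

/-- The creation coefficients of `X⁺(z)`:
`exp (∑ ((1+q^{2n})q^{−n}/n)·p_n·zⁿ) = ∑_k HpF k · z^k`. -/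
def HpF : ℕ → LamF := genFamF fun n => (1 + qq ^ (2*n)) * (qq⁻¹) ^ n

/-- `HpF` indexed by `ℤ`. -/
def HZp (n : ℤ) : LamF := if 0 ≤ n then HpF n.toNat else 0

/-- The annihilation avatars for `X⁺(z)`: since
`(1+q^{2n})q^{−n}/n · a_n = q^{−n}·∂/∂p_n`, the coefficient of `z^{−j}` in
`exp (−∑ ((1+q^{2n})q^{−n}/n)·a_n·z^{−n})` is `ApF j` with `p_i ↦ i·∂/∂p_i`
substituted, where `∑_k ApF k t^k = exp (−∑ q^{−n} p_n tⁿ/n)`. -/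
def ApF : ℕ → LamF := genFamF fun n => -((qq⁻¹) ^ n)

/-- The creation coefficients of `X⁻(z)`:
`exp (−∑ ((1+q^{2n})/n)·p_n·zⁿ) = ∑_k HmF k · z^k`. -/
def HmF : ℕ → LamF := genFamF fun n => -(1 + qq ^ (2*n))

/-- `HmF` indexed by `ℤ`. -/
def HZm (n : ℤ) : LamF := if 0 ≤ n then HmF n.toNat else 0

/-- The differential operator `∏_i (i·∂/∂p_i)^(α i)`. -/
def monOpF (α : ℕ+ →₀ ℕ) : Module.End Fq LamF :=
  ((α.support.sort (· ≤ ·)).map fun (i : ℕ+) =>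
    (((i : ℕ) : Fq) • (pderiv i).toLinearMap) ^ (α i)).prod

/-- `f(∂) P`: substitute `p_i ↦ i·∂/∂p_i` in `f` and apply to `P`. -/
def DopF (f : LamF) (P : LamF) : LamF := ∑ α ∈ f.support, f.coeff α • monOpF α P

/-- Bound for the weighted degree of `P` (weight of `p_i` is `i`). -/
def wboundF (P : LamF) : ℕ := P.support.sup fun α => α.sum fun i k => (i : ℕ) * k

/-- The level-one Fock space `W_i = Λ_F ⊗ F[ℤα]e^{iα/2}`, realized as `ℤ →₀ Λ_F`;
`Finsupp.single m P` represents `P·e^{mα}e^{iα/2}`. -/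
abbrev W : Type := ℤ →₀ LamF

/-- The Drinfeld current component `X_n^+` on `W_i` (the parameter `i ∈ {0,1}` enters
through `z^∂ e^{mα}e^{iα/2} = z^{2m+i} e^{mα}e^{iα/2}`): the coefficient of `z^{−n−1}` in
`X⁺(z) = exp(∑((1+q^{2n})q^{−n}/n)a_{−n}zⁿ)·exp(−∑((1+q^{2n})q^{−n}/n)a_n z^{−n})·e^α z^∂`,
i.e. `X_n^+(P·e^{mα}) = ∑_j HpF_{j−n−1−2m−i} · (ApF j)(∂) P · e^{(m+1)α}`
(only the finitely many `j ≤ wboundF P` contribute). -/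
def Xp (i n : ℤ) (w : W) : W :=
  w.sum fun m P => Finsupp.single (m+1)
    (∑ j ∈ Finset.range (wboundF P + 1),
      HZp ((j : ℤ) - n - 1 - 2*m - i) * DopF (ApF j) P)

/-- The Drinfeld current component `X_n^-` on `W_i`: the coefficient of `z^{−n−1}` in
`X⁻(z) = exp(−∑((1+q^{2n})/n)a_{−n}zⁿ)·exp(∑((1+q^{2n})/n)a_n z^{−n})·e^{−α} z^{−∂}`,
i.e. `X_n^-(P·e^{mα}) = ∑_j HmF_{j+2m+i−n−1} · h_j(∂) P · e^{(m−1)α}`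
(here `(1+q^{2n})/n · a_n = ∂/∂p_n`, whose generating family is `h`). -/
def Xm (i n : ℤ) (w : W) : W :=
  w.sum fun m P => Finsupp.single (m-1)
    (∑ j ∈ Finset.range (wboundF P + 1),
      HZm ((j : ℤ) + 2*m + i - n - 1) * DopF (hhF j) P)

/-- The `q`-factorial `[r]! = ∏_{k=1}^r (q^k − q^{−k})/(q − q^{−1})`. -/
def qfact (r : ℕ) : Fq := ∏ k ∈ Finset.range r, (qq ^ (k+1) - (qq⁻¹) ^ (k+1)) / (qq - qq⁻¹)

/-- The divided power `x^{(r)} = x^r / [r]!` of an operator on `W`. -/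
def divpow (f : W → W) (r : ℕ) (w : W) : W := (qfact r)⁻¹ • (f^[r] w)

/-- Schur function of an integer tuple: `s_ρ = det (h_{ρ_i − i + j})`. -/
def schurF {l : ℕ} (ρ : Fin l → ℤ) : LamF :=
  (Matrix.of fun i j : Fin l => hZF (ρ i - (i.1 : ℤ) + (j.1 : ℤ))).det

/-- Dual Schur function of an integer tuple: `s_{ρ'} = det (e_{ρ_i − i + j})`. -/
def schurEF {l : ℕ} (ρ : Fin l → ℤ) : LamF :=
  (Matrix.of fun i j : Fin l => eZF (ρ i - (i.1 : ℤ) + (j.1 : ℤ))).det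

/-- `q^{±∂}`: `q^{ε∂}(P·e^{mα}e^{iα/2}) = q^{ε(2m+i)}·P·e^{mα}e^{iα/2}`. -/
def qd (i ε : ℤ) (w : W) : W := w.sum fun m P => Finsupp.single m (qq ^ (ε * (2*m + i)) • P)

/-- The Chevalley generator `e₁ = X₀⁺`. -/
def che1 (i : ℤ) : W → W := Xp i 0
/-- The Chevalley generator `f₁ = X₀⁻`. -/
def chf1 (i : ℤ) : W → W := Xm i 0
/-- The Chevalley generator `e₀ = X₁⁻ ∘ q^{−∂}`. -/
def che0 (i : ℤ) (w : W) : W := Xm i 1 (qd i (-1) w)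
/-- The Chevalley generator `f₀ = q^∂ ∘ X₋₁⁺`. -/
def chf0 (i : ℤ) (w : W) : W := qd i 1 (Xp i (-1) w)


/-- `δ = (r−1, r−2, …, 1, 0)` as a function `Fin r → ℤ`. -/
def deltaT (r : ℕ) (i : Fin r) : ℤ := (r : ℤ) - 1 - (i.1 : ℤ)

/-- `σ` sorts the tuple `ν + δ` into strictly decreasing order. -/
def Sorts {r : ℕ} (ν : Fin r → ℤ) (σ : Equiv.Perm (Fin r)) : Prop :=
  StrictAnti fun i => ν (σ i) + deltaT r (σ i)

-- `sgn(ν)`: `0` if `ν` is degenerate (`ν+δ` has a repeated entry, so no sorting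
-- permutation exists), and otherwise `(−1)^{ℓ(σ)} = sign σ` for the unique `σ` with
-- `σ(ν+δ)` strictly decreasing.
open Classical in
def sgnT {r : ℕ} (ν : Fin r → ℤ) : ℤ :=
  if h : ∃ σ, Sorts ν σ then (Equiv.Perm.sign h.choose : ℤ) else 0

-- `π(ν) := σ(ν+δ) − δ` for the sorting permutation `σ` (junk value `0` if `ν` is
-- degenerate).
open Classical in
def piT {r : ℕ} (ν : Fin r → ℤ) : Fin r → ℤ :=
  if h : ∃ σ, Sorts ν σ then
    (fun i => ν (h.choose i) + deltaT r (h.choose i) - deltaT r i) else 0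

/-- `π` is a partition: weakly decreasing with nonnegative entries. -/
def IsPartitionT {r : ℕ} (π : Fin r → ℤ) : Prop := Antitone π ∧ ∀ i, 0 ≤ π i

/-- The entry in row `t` (0-indexed) of a tuple, padded by `0`. -/
def padZ {r : ℕ} (π : Fin r → ℤ) (t : ℕ) : ℤ := if h : t < r then π ⟨t, h⟩ else 0

/-- The number of entries of `π` that are `≥ c+1`, i.e. the (0-indexed) `c`-th entry of
the conjugate partition `π'`. -/
def conjT {r : ℕ} (π : Fin r → ℤ) (c : ℕ) : ℤ :=
  ((Finset.univ.filter fun i : Fin r => (c : ℤ) + 1 ≤ π i).card : ℤ)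

/-- `λ − π` is a horizontal `n`-strip: `π ⊆ λ`, `|λ| = |π| + n`, and at most one box is
added in each column (`λ'_c ≤ π'_c + 1`). -/
def HStrip {r s : ℕ} (π : Fin r → ℤ) (lam : Fin s → ℕ) (n : ℕ) : Prop :=
  (∀ t : ℕ, padZ π t ≤ padZ (fun i => (lam i : ℤ)) t) ∧
  ((∑ i, (lam i : ℤ)) = (∑ i, π i) + n) ∧
  (∀ c : ℕ, conjT (fun i : Fin s => (lam i : ℤ)) c ≤ conjT π c + 1)

/-! ### Generating series of the families `genFamF c` -/

/-- The generating series `∑ g_k t^k` of the family `g = genFamF c`. -/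
def genSer (c : ℕ → Fq) : PowerSeries LamF := PowerSeries.mk (genFamF c)

/-- The logarithmic derivative `∑ c_{k+1} p_{k+1} t^k` of `genSer c`. -/
def logSer (c : ℕ → Fq) : PowerSeries LamF :=
  PowerSeries.mk fun k => c (k+1) • ppF k.succPNat

lemma genFamF_zero (c : ℕ → Fq) : genFamF c 0 = 1 := by
  rw [genFamF]

lemma genFamF_succ (c : ℕ → Fq) (k : ℕ) :
    ((k : Fq) + 1) • genFamF c (k+1) =
      ∑ i ∈ Finset.range (k+1), c (i+1) • (ppF i.succPNat * genFamF c (k - i)) := by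
  rw [genFamF, smul_inv_smul₀ (Nat.cast_add_one_ne_zero k)]
  rfl

lemma derivative_genSer (c : ℕ → Fq) :
    PowerSeries.derivative LamF (genSer c) = logSer c * genSer c := by
  ext1 k
  rw [PowerSeries.coeff_derivative, PowerSeries.coeff_mul,
    Finset.Nat.sum_antidiagonal_eq_sum_range_succ_mk]
  simp only [genSer, logSer, PowerSeries.coeff_mk, smul_mul_assoc]
  rw [← genFamF_succ, mul_comm, Algebra.smul_def]
  simp

lemma constantCoeff_genSer (c : ℕ → Fq) : PowerSeries.constantCoeff (genSer c) = 1 := by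
  rw [← PowerSeries.coeff_zero_eq_constantCoeff_apply, genSer, PowerSeries.coeff_mk,
    genFamF_zero]

/-- A power series over a domain of characteristic zero is determined by its constant term and
its logarithmic derivative. -/
lemma eq_of_logDeriv {R : Type*} [CommRing R] [IsDomain R] [CharZero R] {S F G : PowerSeries R}
    (hF : PowerSeries.derivative R F = S * F) (hG : PowerSeries.derivative R G = S * G)
    (h0 : PowerSeries.constantCoeff F = PowerSeries.constantCoeff G) : F = G := by
  ext1 k
  induction k using Nat.strong_induction_on with
  | _ k ih =>
    cases k with
    | zero => simpa using h0
    | succ k =>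
      have h1 := congrArg (PowerSeries.coeff k) hF
      have h2 := congrArg (PowerSeries.coeff k) hG
      rw [PowerSeries.coeff_derivative, PowerSeries.coeff_mul] at h1 h2
      have h3 : PowerSeries.coeff (k+1) F * ((k : R) + 1)
          = PowerSeries.coeff (k+1) G * ((k : R) + 1) := by
        rw [h1, h2]
        refine Finset.sum_congr rfl fun x hx => ?_
        rw [ih x.2 (by have := Finset.HasAntidiagonal.mem_antidiagonal.mp hx; omega)]
      exact mul_right_cancel₀ (Nat.cast_add_one_ne_zero k) h3

lemma genSer_add (c d : ℕ → Fq) : genSer (fun n => c n + d n) = genSer c * genSer d := by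
  refine eq_of_logDeriv (derivative_genSer _) ?_ ?_
  · have h : logSer (fun n => c n + d n) = logSer c + logSer d := by
      ext1 k
      simp [logSer, add_smul]
    rw [Derivation.leibniz, derivative_genSer, derivative_genSer, h, smul_eq_mul, smul_eq_mul]
    ring
  · simp [constantCoeff_genSer]

lemma genFamF_scale (c : ℕ → Fq) (r : Fq) (k : ℕ) :
    genFamF (fun n => c n * r ^ n) k = r ^ k • genFamF c k := by
  induction k using Nat.strong_induction_on with
  | _ k ih =>
    cases k with
    | zero => simp [genFamF_zero]
    | succ k =>
      have hk : ((k : Fq) + 1) ≠ 0 := Nat.cast_add_one_ne_zero k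
      refine smul_right_injective LamF hk ?_
      change ((k : Fq) + 1) • _ = ((k : Fq) + 1) • _
      rw [smul_comm _ (r ^ (k+1)), genFamF_succ, genFamF_succ, Finset.smul_sum]
      refine Finset.sum_congr rfl fun i hi => ?_
      have hi' : i ≤ k := Nat.lt_succ_iff.mp (Finset.mem_range.mp hi)
      have hp : r ^ (k + 1) = r ^ (i + 1) * r ^ (k - i) := by
        rw [← pow_add]
        congr 1
        omega
      rw [ih (k - i) (by omega), mul_smul_comm, smul_smul, smul_smul, hp]
      congr 1
      ring

/-- `H⁺(z) = H(qz) H(z/q)`, in coefficients. -/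
lemma HpF_eq (k : ℕ) :
    HpF k = ∑ j ∈ Finset.range (k+1),
      (qq⁻¹ ^ j * qq ^ (k - j)) • (hhF j * hhF (k - j)) := by
  have hq : qq ≠ 0 := RatFunc.X_ne_zero
  have h1 : (fun n : ℕ => (1 + qq ^ (2*n)) * (qq⁻¹) ^ n)
      = fun n => (1 * (qq⁻¹) ^ n) + (1 * qq ^ n) := by
    funext n
    rw [two_mul, pow_add, inv_pow]
    field_simp
  have h2 := congrArg (PowerSeries.coeff k)
    (genSer_add (fun n => 1 * (qq⁻¹) ^ n) (fun n => 1 * qq ^ n))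
  rw [PowerSeries.coeff_mul, Finset.Nat.sum_antidiagonal_eq_sum_range_succ_mk] at h2
  simp only [genSer, PowerSeries.coeff_mk] at h2
  rw [HpF, h1, h2]
  refine Finset.sum_congr rfl fun j _ => ?_
  rw [genFamF_scale (fun _ => 1), genFamF_scale (fun _ => 1), smul_mul_smul_comm]
  rfl

/-! ### The operators `f(∂)` and translations of the power sums -/

/-- The operator `i·∂/∂p_i`. -/
def dOp (i : ℕ+) : Module.End Fq LamF := ((i : ℕ) : Fq) • (pderiv i).toLinearMap

lemma dOp_comm (i j : ℕ+) : dOp i * dOp j = dOp j * dOp i := by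
  refine LinearMap.ext fun P => ?_
  have h : pderiv i (pderiv j P) = pderiv j (pderiv i P) := by
    have h0 : ⁅pderiv (R := Fq) i, pderiv (R := Fq) j⁆ = 0 := by
      apply MvPolynomial.derivation_ext
      intro k
      rw [Derivation.commutator_apply]
      classical
      simp [pderiv_X, Pi.single_apply, apply_ite]
    have := congrArg (fun D : Derivation Fq LamF LamF => D P) h0
    simp only [Derivation.commutator_apply] at this
    exact sub_eq_zero.mp this
  simp [dOp, h, smul_smul, mul_comm]

lemma monOpF_single_add (i : ℕ+) (α : ℕ+ →₀ ℕ) :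
    monOpF (Finsupp.single i 1 + α) = monOpF α * dOp i := by
  -- All factors lie in the commutative algebra generated by the `dOp i`, where the ordering of
  -- the factors in `monOpF` is immaterial.
  let A := Algebra.adjoin Fq (Set.range dOp)
  have : IsMulCommutative A := Algebra.isMulCommutative_adjoin Fq (by
    rintro _ ⟨i, rfl⟩ _ ⟨j, rfl⟩
    exact dOp_comm i j)
  let _ : CommMonoid A := { (inferInstance : Monoid A) with mul_comm := mul_comm' }
  let d : ℕ+ → A := fun i => ⟨dOp i, Algebra.subset_adjoin ⟨i, rfl⟩⟩
  have key : ∀ α : ℕ+ →₀ ℕ, monOpF α = ((α.prod fun i k => d i ^ k : A) : Module.End Fq LamF) := by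
    intro α
    have h1 : (α.prod fun i k => d i ^ k) =
        ((α.support.sort (· ≤ ·)).map fun i => d i ^ α i).prod := by
      rw [Finsupp.prod, ← List.prod_toFinset _ (Finset.sort_nodup _ _), Finset.sort_toFinset]
    rw [h1]
    have h2 := map_list_prod A.val.toMonoidHom ((α.support.sort (· ≤ ·)).map fun i => d i ^ α i)
    refine Eq.trans ?_ h2.symm
    rw [List.map_map]
    rfl
  rw [key, key, Finsupp.prod_add_index' (by simp) (by intros; exact pow_add _ _ _),
    Finsupp.prod_single_index (by simp), pow_one, mul_comm]
  rfl

/-- `f ↦ f(∂) P` as a linear map. -/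
def dopLin (P : LamF) : LamF →ₗ[Fq] LamF :=
  Finsupp.lsum Fq (fun α => LinearMap.toSpanSingleton Fq LamF (monOpF α P)) ∘ₗ
    (MvPolynomial.basisMonomials ℕ+ Fq).repr.toLinearMap

lemma dopLin_monomial (P : LamF) (α : ℕ+ →₀ ℕ) (r : Fq) :
    dopLin P (monomial α r) = r • monOpF α P := by
  have h : (monomial α r : LamF) = r • MvPolynomial.basisMonomials ℕ+ Fq α := by
    simp [smul_monomial]
  rw [h, map_smul, dopLin, LinearMap.comp_apply, LinearEquiv.coe_coe, Module.Basis.repr_self]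
  simp

lemma DopF_eq_dopLin (f P : LamF) : DopF f P = dopLin P f := by
  conv_rhs => rw [f.as_sum]
  rw [map_sum]
  exact Finset.sum_congr rfl fun α _ => (dopLin_monomial P α _).symm

lemma dopLin_pp_mul (i : ℕ+) (f P : LamF) :
    dopLin P (ppF i * f) = dopLin (dOp i P) f := by
  induction f using MvPolynomial.induction_on' with
  | monomial α r =>
    have h : ppF i * monomial α r = monomial (Finsupp.single i 1 + α) r := by
      rw [ppF, X, monomial_mul, one_mul]
    rw [h, dopLin_monomial, dopLin_monomial, monOpF_single_add]
    rfl
  | add p q hp hq => rw [mul_add, map_add, map_add, hp, hq]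

/-- The translation `p_n ↦ p_n + c_n tⁿ`; by Taylor's formula it is the generating function in
`t` of the operators `genFamF c k (∂)`. -/
def transl (c : ℕ → Fq) : LamF →ₐ[Fq] Polynomial LamF :=
  MvPolynomial.aeval fun n : ℕ+ =>
    Polynomial.C (ppF n) + Polynomial.monomial (n : ℕ) (C (c n) : LamF)

lemma transl_C (c : ℕ → Fq) (r : Fq) : transl c (C r) = Polynomial.C (C r) := by
  have h := (transl c).commutes r
  exact h

lemma transl_X (c : ℕ → Fq) (n : ℕ+) :
    transl c (X n) = Polynomial.C (ppF n) + Polynomial.monomial (n : ℕ) (C (c n) : LamF) := by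
  simp [transl]

/-- The chain rule for `d/dt` of a translated polynomial. As infinitely many variables are
present, it is stated modulo `t^N`. -/
lemma transl_chain (c : ℕ → Fq) (N : ℕ) (P : LamF) :
    (Polynomial.X : Polynomial LamF) ^ N ∣ Polynomial.derivative (transl c P) -
      ∑ i ∈ Finset.range N, Polynomial.monomial i (C (c (i+1)) : LamF) *
        transl c (dOp i.succPNat P) := by
  classical
  induction P using MvPolynomial.induction_on with
  | C r => simp [dOp]
  | add p q hp hq =>
    have h := dvd_add hp hq
    convert h using 1
    simp only [map_add, mul_add, Finset.sum_add_distrib]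
    ring
  | mul_X p n hp =>
    have hX : (Polynomial.X : Polynomial LamF) ^ N ∣ Polynomial.derivative (transl c (X n)) -
        ∑ i ∈ Finset.range N, Polynomial.monomial i (C (c (i+1)) : LamF) *
          transl c (dOp i.succPNat (X n)) := by
      have hd : ∀ i : ℕ, Polynomial.monomial i (C (c (i+1)) : LamF) *
          transl c (dOp i.succPNat (X n)) =
          if i = (n : ℕ) - 1 then Polynomial.monomial ((n : ℕ) - 1) (C (c n * (n : ℕ)) : LamF)
          else 0 := by
        intro i
        have hn := n.pos
        split_ifs with h
        · obtain rfl : n = i.succPNat := by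
            apply PNat.eq
            change (n : ℕ) = i + 1
            omega
          have : dOp i.succPNat (X i.succPNat) =
              C (((i+1 : ℕ)) : Fq) := by
            rw [dOp, LinearMap.smul_apply, Derivation.coeFn_coe, pderiv_X_self, smul_eq_C_mul,
              mul_one]
            rfl
          rw [this, transl_C, Polynomial.monomial_mul_C, ← C_mul]
          simp
        · have : dOp i.succPNat (X n) = 0 := by
            have hne : n ≠ i.succPNat := by
              intro h'
              rw [h'] at h
              simp at h
            rw [dOp, LinearMap.smul_apply, Derivation.coeFn_coe, pderiv_X_of_ne hne, smul_zero]
          rw [this]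
          simp
      rw [Finset.sum_congr rfl fun i _ => hd i, Finset.sum_ite_eq', transl_X]
      simp only [map_add, Polynomial.derivative_C, zero_add, Polynomial.derivative_monomial,
        Finset.mem_range]
      split_ifs with h
      · simp
      · rw [sub_zero, ← Polynomial.C_mul_X_pow_eq_monomial]
        exact Dvd.dvd.mul_left (pow_dvd_pow _ (by omega)) _
    have h := dvd_add (Dvd.dvd.mul_right hp (transl c (X n))) (Dvd.dvd.mul_left hX (transl c p))
    convert h using 1
    have hleib : ∀ i, dOp i (p * X n) = dOp i p * X n + p * dOp i (X n) := by
      intro i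
      simp only [dOp, LinearMap.smul_apply, Derivation.coeFn_coe,
        Derivation.leibniz, smul_eq_mul, smul_add, mul_smul_comm, smul_mul_assoc]
      rw [mul_comm (X n), add_comm]
    simp only [hleib, map_mul, map_add, Polynomial.derivative_mul, mul_add,
      Finset.sum_add_distrib, sub_mul, mul_sub, Finset.sum_mul, Finset.mul_sum]
    simp only [mul_left_comm (transl c p), mul_assoc]
    ring

lemma coeff_transl_succ (c : ℕ → Fq) (k : ℕ) (P : LamF) :
    ((k : Fq) + 1) • (transl c P).coeff (k+1) =
      ∑ i ∈ Finset.range (k+1),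
        c (i+1) • (transl c (dOp i.succPNat P)).coeff (k - i) := by
  have h := Polynomial.X_pow_dvd_iff.mp (transl_chain c (k+1) P) k (Nat.lt_succ_self k)
  rw [Polynomial.coeff_sub, Polynomial.coeff_derivative, sub_eq_zero,
    Polynomial.finsetSum_coeff] at h
  have e : ((k : Fq) + 1) • (transl c P).coeff (k+1) =
      (transl c P).coeff (k+1) * ((k : LamF) + 1) := by
    rw [Algebra.smul_def, mul_comm]
    simp
  rw [e, h]
  refine Finset.sum_congr rfl fun i hi => ?_
  have hi' : i ≤ k := Nat.lt_succ_iff.mp (Finset.mem_range.mp hi)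
  rw [← Polynomial.C_mul_X_pow_eq_monomial, mul_assoc, Polynomial.coeff_C_mul,
    Polynomial.coeff_X_pow_mul', if_pos hi', smul_eq_C_mul]

lemma DopF_genFamF (c : ℕ → Fq) (k : ℕ) (P : LamF) :
    DopF (genFamF c k) P = (transl c P).coeff k := by
  rw [DopF_eq_dopLin]
  induction k using Nat.strong_induction_on generalizing P with
  | _ k ih =>
    cases k with
    | zero =>
      have h1 : genFamF c 0 = monomial 0 1 := by rw [genFamF_zero]; rfl
      have h2 : monOpF 0 = 1 := by simp [monOpF]
      rw [h1, dopLin_monomial, h2, one_smul, Module.End.one_apply,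
        Polynomial.coeff_zero_eq_eval_zero]
      have h3 : ((Polynomial.evalRingHom (0 : LamF)).comp (transl c).toRingHom) =
          RingHom.id LamF := by
        apply MvPolynomial.ringHom_ext
        · intro r
          simp
        · intro n
          simp [transl_X, ppF]
      exact (congrArg (fun f : LamF →+* LamF => f P) h3).symm
    | succ k =>
      have hk : ((k : Fq) + 1) ≠ 0 := Nat.cast_add_one_ne_zero k
      refine smul_right_injective LamF hk ?_
      change ((k : Fq) + 1) • _ = ((k : Fq) + 1) • _
      rw [coeff_transl_succ, ← map_smul, genFamF_succ, map_sum]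
      refine Finset.sum_congr rfl fun i _ => ?_
      rw [map_smul, dopLin_pp_mul, ih (k - i) (by omega)]

lemma natDegree_transl_le (c : ℕ → Fq) (P : LamF) : (transl c P).natDegree ≤ wboundF P := by
  conv_lhs => rw [P.as_sum]
  rw [map_sum]
  refine Polynomial.natDegree_sum_le_of_forall_le _ _ fun α hα => ?_
  have hm : transl c (monomial α (P.coeff α)) = Polynomial.C (C (P.coeff α)) *
      ∏ n ∈ α.support, (transl c (X n)) ^ α n := by
    rw [monomial_eq, map_mul, transl_C, Finsupp.prod, map_prod]
    simp
  rw [hm]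
  refine (Polynomial.natDegree_C_mul_le _ _).trans ((Polynomial.natDegree_prod_le _ _).trans ?_)
  refine le_trans ?_ (Finset.le_sup (f := fun α : ℕ+ →₀ ℕ => α.sum fun i k => (i : ℕ) * k) hα)
  refine Finset.sum_le_sum fun n _ => ?_
  refine (Polynomial.natDegree_pow_le).trans ?_
  rw [mul_comm]
  refine Nat.mul_le_mul_right _ ?_
  rw [transl_X]
  exact (Polynomial.natDegree_add_le _ _).trans (max_le (by simp) (Polynomial.natDegree_monomial_le _))

/-! ### Bernstein's formula and the action of `X_n^+` -/

/-- The coefficients `-q^{-n}` defining the family `ApF`. -/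
def cA (n : ℕ) : Fq := -((qq⁻¹) ^ n)

/-- The element `u = t/q`. -/
def uA : Polynomial LamF := Polynomial.monomial 1 (C qq⁻¹ : LamF)

lemma uA_pow (k : ℕ) : uA ^ k = Polynomial.monomial k (C (qq⁻¹ ^ k) : LamF) := by
  rw [uA, Polynomial.monomial_pow, one_mul, C_pow]

lemma derivative_map_ser {R S : Type*} [CommRing R] [CommRing S] (f : R →+* S)
    (F : PowerSeries R) :
    PowerSeries.derivative S (PowerSeries.map f F)
      = PowerSeries.map f (PowerSeries.derivative R F) := by
  ext1 k
  simp [PowerSeries.coeff_derivative]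

lemma derivative_one_sub_mul {R : Type*} [CommRing R] (u : R) {L g : PowerSeries R}
    (hg : PowerSeries.derivative R g = L * g) :
    PowerSeries.derivative R ((1 - PowerSeries.C u * PowerSeries.X) * g)
      = (L - PowerSeries.mk fun k => u ^ (k+1)) *
        ((1 - PowerSeries.C u * PowerSeries.X) * g) := by
  have hgeo : (PowerSeries.mk fun k => u ^ (k+1)) * (1 - PowerSeries.C u * PowerSeries.X)
      = PowerSeries.C u := by
    ext1 k
    rw [mul_sub, mul_one, ← mul_assoc, map_sub]
    cases k with
    | zero => simp
    | succ k =>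
      rw [PowerSeries.coeff_succ_mul_X, mul_comm _ (PowerSeries.C u), PowerSeries.coeff_C_mul]
      simp [pow_succ, mul_comm]
  rw [Derivation.leibniz, hg, map_sub, Derivation.leibniz, PowerSeries.derivative_X,
    PowerSeries.derivative_C, PowerSeries.derivative_one]
  simp only [smul_eq_mul, mul_one, zero_sub]
  linear_combination g * hgeo

/-- The translation by `-q^{-n} tⁿ` multiplies the generating series `H(x)` by `1 - u x`. -/
lemma map_transl_genSer :
    PowerSeries.map (transl cA).toRingHom (genSer fun _ => 1)
      = (1 - PowerSeries.C uA * PowerSeries.X) *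
        PowerSeries.map Polynomial.C (genSer fun _ => 1) := by
  have hS : PowerSeries.map (transl cA).toRingHom (logSer fun _ => 1)
      = PowerSeries.map Polynomial.C (logSer fun _ => 1)
        - PowerSeries.mk fun k => uA ^ (k+1) := by
    ext1 k
    simp only [PowerSeries.coeff_map, logSer, PowerSeries.coeff_mk, map_sub, one_smul]
    rw [ppF]
    refine (transl_X cA k.succPNat).trans ?_
    rw [uA_pow, sub_eq_add_neg, ← map_neg, ← C_neg]
    rfl
  refine eq_of_logDeriv (S := PowerSeries.map (transl cA).toRingHom (logSer fun _ => 1)) ?_ ?_ ?_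
  · rw [derivative_map_ser, derivative_genSer, map_mul]
  · rw [hS]
    refine derivative_one_sub_mul uA ?_
    rw [derivative_map_ser, derivative_genSer, map_mul]
  · have h1 : ∀ f : LamF →+* Polynomial LamF,
        PowerSeries.constantCoeff (PowerSeries.map f (genSer fun _ => 1)) = 1 := by
      intro f
      rw [← PowerSeries.coeff_zero_eq_constantCoeff_apply, PowerSeries.coeff_map,
        PowerSeries.coeff_zero_eq_constantCoeff_apply, constantCoeff_genSer, map_one]
    rw [map_mul, h1, h1]
    simp

lemma hZF_of_neg {k : ℤ} (hk : k < 0) : hZF k = 0 := by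
  rw [hZF, if_neg (by omega)]

lemma hZF_natCast (k : ℕ) : hZF (k : ℤ) = hhF k := by
  rw [hZF, if_pos (by omega), Int.toNat_natCast]

lemma transl_hZF (k : ℤ) :
    transl cA (hZF k) = Polynomial.C (hZF k) - uA * Polynomial.C (hZF (k-1)) := by
  rcases lt_or_ge k 0 with hk | hk
  · rw [hZF_of_neg hk, hZF_of_neg (by omega)]
    simp
  · obtain ⟨k, rfl⟩ := Int.eq_ofNat_of_zero_le hk
    have h := congrArg (PowerSeries.coeff k) map_transl_genSer
    rw [sub_mul, one_mul, mul_assoc, map_sub, PowerSeries.coeff_C_mul] at h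
    cases k with
    | zero =>
      simp [genSer, genFamF_zero] at h
      rw [hZF_of_neg (show ((0 : ℕ) : ℤ) - 1 < 0 by omega)]
      simp [hZF, hhF, genFamF_zero]
    | succ k =>
      rw [PowerSeries.coeff_succ_X_mul] at h
      rw [hZF_natCast, show ((k+1 : ℕ) : ℤ) - 1 = (k : ℕ) by push_cast; ring, hZF_natCast]
      simpa [genSer, hhF] using h

/-- The signed-minor expansion `det (x_{i,j+1} - u x_{i,j}) = ∑_k (-u)^k · (minor without
column k)`: prefix the row `(1, u, u², …)` and subtract `u` times each column from the next. -/
lemma det_sub_shift {R : Type*} [CommRing R] {l : ℕ} (u : R) (x : Fin l → Fin (l+1) → R) :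
    (Matrix.of fun i j : Fin l => x i j.succ - u * x i j.castSucc).det
      = ∑ k : Fin (l+1), (-1) ^ (k : ℕ) * u ^ (k : ℕ) *
          (Matrix.of fun i j : Fin l => x i (k.succAbove j)).det := by
  let A : Matrix (Fin (l+1)) (Fin (l+1)) R :=
    Matrix.of (Fin.cons (fun k => u ^ (k : ℕ)) x)
  let B : Matrix (Fin (l+1)) (Fin (l+1)) R :=
    Matrix.of (Fin.cons (Fin.cons 1 fun _ => 0)
      fun i => Fin.cons (x i 0) fun j => x i j.succ - u * x i j.castSucc)
  have hAB : A.det = B.det := by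
    refine Matrix.det_eq_of_forall_col_eq_smul_add_pred (fun _ => u) ?_ ?_
    · intro i
      refine Fin.cases ?_ (fun i => ?_) i <;> simp [A, B]
    · intro i j
      refine Fin.cases ?_ (fun i => ?_) i
      · simp [A, B, pow_succ, mul_comm]
      · simp [A, B]
  have hB : B.det = (Matrix.of fun i j : Fin l => x i j.succ - u * x i j.castSucc).det := by
    rw [Matrix.det_succ_row_zero, Fin.sum_univ_succ, Finset.sum_eq_zero]
    · have : B.submatrix Fin.succ (Fin.succAbove 0) =
          (Matrix.of fun i j : Fin l => x i j.succ - u * x i j.castSucc) := by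
        ext i j
        simp [B]
      rw [this]
      simp [B]
    · intro j _
      simp [B]
  rw [← hB, ← hAB, Matrix.det_succ_row_zero]
  refine Finset.sum_congr rfl fun k _ => ?_
  congr 1

/-- The minor of the Jacobi–Trudi matrix of `(a, ρ)` without the first row and column `k`. -/
def minorF {l : ℕ} (ρ : Fin l → ℤ) (k : Fin (l+1)) : LamF :=
  (Matrix.of fun i j : Fin l => hZF (ρ i - ((i.1 : ℤ) + 1) + ((k.succAbove j).1 : ℤ))).det

lemma schurF_cons {l : ℕ} (a : ℤ) (ρ : Fin l → ℤ) :
    schurF (Fin.cons a ρ : Fin (l+1) → ℤ)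
      = ∑ k : Fin (l+1), (-1) ^ (k : ℕ) * hZF (a + (k : ℕ)) * minorF ρ k := by
  rw [schurF, Matrix.det_succ_row_zero]
  refine Finset.sum_congr rfl fun k _ => ?_
  have h : ((Matrix.of fun i j : Fin (l+1) => hZF ((Fin.cons a ρ : Fin (l+1) → ℤ) i
      - (i.1 : ℤ) + (j.1 : ℤ))).submatrix Fin.succ k.succAbove).det = minorF ρ k := by
    rw [minorF]
    congr 1
  rw [h]
  simp

lemma transl_schurF {l : ℕ} (ρ : Fin l → ℤ) :
    transl cA (schurF ρ) = ∑ k : Fin (l+1), Polynomial.monomial (k : ℕ)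
      ((qq⁻¹) ^ (k : ℕ) • ((-1) ^ (k : ℕ) * minorF ρ k)) := by
  obtain ⟨x, hx⟩ : ∃ x : Fin l → Fin (l+1) → Polynomial LamF, ∀ i j,
      x i j = Polynomial.C (hZF (ρ i - ((i.1 : ℤ) + 1) + (j.1 : ℤ))) := ⟨_, fun _ _ => rfl⟩
  have h1 : transl cA (schurF ρ) = (Matrix.of fun i j : Fin l =>
      x i j.succ - uA * x i j.castSucc).det := by
    rw [schurF, AlgHom.map_det]
    congr 1
    ext1 i j
    simp only [AlgHom.mapMatrix_apply, Matrix.map_apply, Matrix.of_apply, transl_hZF, hx,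
      Fin.val_succ, Fin.val_castSucc]
    rw [show ρ i - (i.1 : ℤ) + (j.1 : ℤ) - 1 = ρ i - ((i.1 : ℤ) + 1) + (j.1 : ℤ) by ring,
      show ρ i - ((i.1 : ℤ) + 1) + ((j.1 + 1 : ℕ) : ℤ) = ρ i - (i.1 : ℤ) + (j.1 : ℤ) by
        push_cast; ring]
  rw [h1, det_sub_shift]
  simp only [hx]
  refine Finset.sum_congr rfl fun k _ => ?_
  have h2 : (Matrix.of fun i j : Fin l => (Polynomial.C
      (hZF (ρ i - ((i.1 : ℤ) + 1) + ((k.succAbove j).1 : ℤ))) : Polynomial LamF)).det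
      = Polynomial.C (minorF ρ k) := by
    rw [minorF, RingHom.map_det]
    rfl
  rw [h2, uA_pow, mul_assoc, Polynomial.monomial_mul_C, smul_eq_C_mul]
  rw [show ((-1 : Polynomial LamF)) ^ (k : ℕ) = Polynomial.C ((-1) ^ (k : ℕ)) by simp,
    Polynomial.C_mul_monomial]
  congr 1
  ring

lemma HZp_eq (N : ℕ) (x : ℤ) (hx : x < N) :
    HZp x = ∑ j ∈ Finset.range N, qq ^ (x - 2 * (j : ℤ)) • (hhF j * hZF (x - j)) := by
  have hq : qq ≠ 0 := RatFunc.X_ne_zero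
  rcases lt_or_ge x 0 with h | h
  · rw [HZp, if_neg (by omega), Finset.sum_eq_zero]
    intro j _
    rw [hZF_of_neg (by omega), mul_zero, smul_zero]
  · obtain ⟨k, rfl⟩ := Int.eq_ofNat_of_zero_le h
    rw [HZp, if_pos h, Int.toNat_natCast, HpF_eq]
    refine Eq.trans (Finset.sum_congr rfl fun j hj => ?_)
      (Finset.sum_subset (Finset.range_mono (show k + 1 ≤ N by omega)) fun j _ hj => ?_)
    · have hj' : j ≤ k := Nat.lt_succ_iff.mp (Finset.mem_range.mp hj)
      rw [← Nat.cast_sub hj', hZF_natCast]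
      congr 1
      rw [inv_pow, ← zpow_natCast, ← zpow_natCast, ← zpow_neg, ← zpow_add₀ hq]
      congr 1
      push_cast [hj']
      ring
    · rw [Finset.mem_range] at hj
      rw [hZF_of_neg (by omega), mul_zero, smul_zero]

lemma schurF_cons_eq_zero {l : ℕ} (a : ℤ) (ρ : Fin l → ℤ) (ha : a < -(l : ℤ)) :
    schurF (Fin.cons a ρ : Fin (l+1) → ℤ) = 0 := by
  rw [schurF_cons]
  refine Finset.sum_eq_zero fun k _ => ?_
  rw [hZF_of_neg (by have := k.2; omega), mul_zero, zero_mul]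

lemma Xp_single_schurF {l : ℕ} (ρ : Fin l → ℤ) (m n i : ℤ) :
    Xp i n (Finsupp.single m (schurF ρ))
      = Finsupp.single (m+1)
          (∑ᶠ j : ℕ, qq ^ (-2*m - n - 1 - i - 2*(j : ℤ)) •
            (hhF j * schurF (Fin.cons (-2*m - n - 1 - i - (j : ℤ)) ρ : Fin (l+1) → ℤ))) := by
  have hq : qq ≠ 0 := RatFunc.X_ne_zero
  rw [Xp, Finsupp.sum_single_index (by simp [DopF])]
  congr 1
  set b : ℤ := -2*m - n - 1 - i with hb
  -- Any `N > b + l` bounds the contributing indices `j` on the right-hand side.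
  obtain ⟨N, hN⟩ : ∃ N : ℕ, b + l < N := ⟨(b + l).toNat + 1, by omega⟩
  rw [finsum_eq_sum_of_support_subset (s := Finset.range N)]
  swap
  · intro j hj
    rw [Function.mem_support] at hj
    by_contra hjN
    apply hj
    have : N ≤ j := by simpa using hjN
    rw [schurF_cons_eq_zero _ _ (by omega), mul_zero, smul_zero]
  let f : ℕ → LamF →ₗ[LamF] LamF := fun j => LinearMap.mulLeft LamF (HZp ((j : ℤ) + b))
  have h1 : ∑ j ∈ Finset.range (wboundF (schurF ρ) + 1),
      HZp ((j : ℤ) - n - 1 - 2*m - i) * DopF (ApF j) (schurF ρ)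
      = Polynomial.lsum f (transl cA (schurF ρ)) := by
    rw [Polynomial.lsum_apply, Polynomial.sum_over_range' _ (by simp) _
      (Nat.lt_succ_of_le (natDegree_transl_le cA (schurF ρ)))]
    refine Finset.sum_congr rfl fun j _ => ?_
    rw [show ApF j = genFamF cA j from rfl, DopF_genFamF]
    change _ = HZp ((j : ℤ) + b) * _
    congr 2
    rw [hb]
    ring
  rw [h1, transl_schurF, map_sum]
  have h2 : ∀ k : Fin (l+1), Polynomial.lsum f (Polynomial.monomial (k : ℕ)
      ((qq⁻¹) ^ (k : ℕ) • ((-1) ^ (k : ℕ) * minorF ρ k)))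
      = ∑ j ∈ Finset.range N, qq ^ (b - 2 * (j : ℤ)) • (hhF j *
          ((-1) ^ (k : ℕ) * hZF (b - j + (k : ℕ)) * minorF ρ k)) := by
    intro k
    rw [Polynomial.lsum_apply, Polynomial.sum_monomial_index _ _ (by simp)]
    change HZp ((k : ℕ) + b) * _ = _
    rw [HZp_eq N _ (by have := k.2; omega), Finset.sum_mul]
    refine Finset.sum_congr rfl fun j _ => ?_
    rw [smul_mul_smul_comm]
    congr 1
    · rw [inv_pow, ← zpow_natCast, ← zpow_neg, ← zpow_add₀ hq]
      congr 1
      ring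
    · rw [show ((k : ℕ) : ℤ) + b - j = b - j + (k : ℕ) by ring]
      ring
  rw [Finset.sum_congr rfl fun k _ => h2 k, Finset.sum_comm]
  refine Finset.sum_congr rfl fun j _ => ?_
  rw [schurF_cons, Finset.mul_sum, Finset.smul_sum]

/-! ### Straightening of Jacobi–Trudi determinants -/

lemma exists_sorts {r : ℕ} {ν : Fin r → ℤ}
    (h : Function.Injective fun i => ν i + deltaT r i) : ∃ σ, Sorts ν σ := by
  let f : Fin r → ℤ := fun i => -(ν i + deltaT r i)
  have hf : Function.Injective f := fun a b hab => h (neg_injective hab)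
  refine ⟨Tuple.sort f, ?_⟩
  have hs : StrictMono (f ∘ Tuple.sort f) :=
    (Tuple.monotone_sort f).strictMono_of_injective (hf.comp (Tuple.sort f).injective)
  intro a b hab
  exact neg_lt_neg_iff.mp (hs hab)

lemma schurF_straighten {r : ℕ} (ν : Fin r → ℤ) :
    schurF ν = (sgnT ν : Fq) • schurF (piT ν) := by
  by_cases h : ∃ σ, Sorts ν σ
  · rw [sgnT, dif_pos h, piT, dif_pos h]
    generalize h.choose = σ
    have h1 : schurF (fun i => ν (σ i) + deltaT r (σ i) - deltaT r i)
        = ((Equiv.Perm.sign σ : ℤ) : LamF) * schurF ν := by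
      rw [schurF, schurF, ← Matrix.det_permute]
      congr 1
      ext1 i j
      simp only [Matrix.of_apply, Matrix.submatrix_apply, id, deltaT]
      congr 1
      ring
    rw [h1]
    rcases Int.units_eq_one_or (Equiv.Perm.sign σ) with hs | hs <;> simp [hs]
  · have hinj : ¬ Function.Injective fun i => ν i + deltaT r i := fun hi => h (exists_sorts hi)
    rw [sgnT, dif_neg h, Int.cast_zero, zero_smul]
    simp only [Function.Injective, not_forall] at hinj
    obtain ⟨a, b, hab, hne⟩ := hinj
    refine Matrix.det_zero_of_row_eq hne ?_
    funext j
    simp only [Matrix.of_apply]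
    simp only [deltaT] at hab
    congr 1
    linarith

lemma piT_antitone {r : ℕ} (ν : Fin r → ℤ) : Antitone (piT ν) := by
  by_cases h : ∃ σ, Sorts ν σ
  · have hs : Sorts ν h.choose := h.choose_spec
    rw [piT, dif_pos h]
    generalize h.choose = σ at hs
    cases r with
    | zero => exact fun a => a.elim0
    | succ r =>
      refine Fin.antitone_iff_succ_le.mpr fun i => ?_
      have h1 := hs (Fin.castSucc_lt_succ (i := i))
      have h2 : deltaT (r+1) i.castSucc = deltaT (r+1) i.succ + 1 := by
        simp only [deltaT, Fin.val_succ, Fin.val_castSucc]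
        push_cast
        ring
      simp only at h1
      omega
  · rw [piT, dif_neg h]
    exact antitone_const

/-- If the smallest entry of `π` is negative, then the last row of the determinant vanishes. -/
lemma schurF_eq_zero_of_not_partition {r : ℕ} (π : Fin (r+1) → ℤ) (ha : Antitone π)
    (hp : ¬ IsPartitionT π) : schurF π = 0 := by
  have h : ∃ i, π i < 0 := by
    by_contra hc
    push Not at hc
    exact hp ⟨ha, hc⟩
  obtain ⟨i, hi⟩ := h
  refine Matrix.det_eq_zero_of_row_eq_zero (Fin.last r) fun j => ?_
  have h1 := ha (Fin.le_last i)
  rw [Matrix.of_apply]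
  refine hZF_of_neg ?_
  have h2 := j.2
  rw [Fin.val_last]
  omega

/-! ### The Pieri rule -/

/-- The tail series `G_k(t) = ∑_b h_{k+b} t^b`. -/
def tailSer (k : ℤ) : PowerSeries LamF := PowerSeries.mk fun b => hZF (k + b)

lemma tailSer_rec (k : ℤ) :
    tailSer k = PowerSeries.C (hZF k) + PowerSeries.X * tailSer (k+1) := by
  ext1 b
  rw [map_add]
  cases b with
  | zero => simp [tailSer]
  | succ b =>
    rw [PowerSeries.coeff_succ_X_mul]
    simp only [tailSer, PowerSeries.coeff_mk, PowerSeries.coeff_C]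
    rw [if_neg (by omega), zero_add]
    congr 1
    push_cast
    ring

lemma tailSer_split (x : ℤ) (p u : ℕ) (h : p ≤ u) :
    tailSer (x + p) = ∑ v ∈ Finset.Icc p u,
        PowerSeries.X ^ (v - p) * PowerSeries.C (hZF (x + v))
      + PowerSeries.X ^ (u + 1 - p) * tailSer (x + (u + 1 : ℕ)) := by
  induction u, h using Nat.le_induction with
  | base =>
    rw [Finset.Icc_self, Finset.sum_singleton, Nat.sub_self, pow_zero, one_mul,
      Nat.add_sub_cancel_left, pow_one, tailSer_rec]
    congr 3
    push_cast
    ring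
  | succ u h ih =>
    rw [ih, Finset.sum_Icc_succ_top (by omega), tailSer_rec (x + (u + 1 : ℕ)),
      show u + 1 + 1 - p = (u + 1 - p) + 1 by omega, pow_succ,
      show x + ((u + 1 + 1 : ℕ) : ℤ) = x + (u + 1 : ℕ) + 1 by push_cast; ring]
    ring

/-- `p` with a zero part appended. -/
def padP {r : ℕ} (p : Fin (r+1) → ℕ) : Fin (r+2) → ℕ := Fin.snoc p 0

/-- The upper bounds `(p₁ + j, p₁, p₂, …)` for the parts of `λ` when `λ - p` is a horizontal
`j`-strip. -/
def ubP {r : ℕ} (p : Fin (r+1) → ℕ) (j : ℕ) : Fin (r+2) → ℕ := Fin.cons (p 0 + j) p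

lemma padP_castSucc {r : ℕ} (p : Fin (r+1) → ℕ) (i : Fin (r+1)) : padP p i.castSucc = p i := by
  simp [padP]

lemma padP_last {r : ℕ} (p : Fin (r+1) → ℕ) : padP p (Fin.last (r+1)) = 0 := by
  simp [padP]

lemma padP_zero {r : ℕ} (p : Fin (r+1) → ℕ) : padP p 0 = p 0 :=
  padP_castSucc p 0

lemma ubP_zero {r : ℕ} (p : Fin (r+1) → ℕ) (j : ℕ) : ubP p j 0 = p 0 + j := rfl

lemma ubP_succ {r : ℕ} (p : Fin (r+1) → ℕ) (j : ℕ) (i : Fin (r+1)) : ubP p j i.succ = p i := rfl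

lemma padP_succ_le {r : ℕ} {p : Fin (r+1) → ℕ} (hp : Antitone p) (i : Fin (r+1)) :
    padP p i.succ ≤ p i := by
  induction i using Fin.lastCases with
  | last => rw [Fin.succ_last, padP_last]; exact Nat.zero_le _
  | cast i =>
    rw [Fin.succ_castSucc, padP_castSucc]
    exact hp (Fin.castSucc_lt_succ (i := i)).le

/-- The matrix of tail series attached to `(p, 0)`; by multilinearity its determinant is
`∑_β t^{|β|} s_{(p,0)+β}`, the sum being over all `β ≥ 0`. -/
def tailMat {r : ℕ} (p : Fin (r+1) → ℕ) : Matrix (Fin (r+2)) (Fin (r+2)) (PowerSeries LamF) :=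
  Matrix.of fun i c => tailSer ((padP p i : ℤ) - (i.1 : ℤ) + (c.1 : ℤ))

/-- Subtracting from each column `t` times the next one turns all columns but the last into those
of the Jacobi–Trudi matrix; the last row is then `(0, …, 0, H(t))`. -/
lemma det_tailMat {r : ℕ} (p : Fin (r+1) → ℕ) :
    (tailMat p).det = tailSer 0 * PowerSeries.C (schurF fun i => (p i : ℤ)) := by
  let B : Matrix (Fin (r+2)) (Fin (r+2)) (PowerSeries LamF) := Matrix.of fun i c =>
    if c = Fin.last (r+1) then tailMat p i c
    else PowerSeries.C (hZF ((padP p i : ℤ) - (i.1 : ℤ) + (c.1 : ℤ)))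
  have h1 : (tailMat p).det = B.det := by
    rw [← Matrix.det_submatrix_equiv_self Fin.revPerm (tailMat p),
      ← Matrix.det_submatrix_equiv_self Fin.revPerm B]
    refine Matrix.det_eq_of_forall_col_eq_smul_add_pred (fun _ => PowerSeries.X) ?_ ?_
    · intro i
      simp [B]
    · intro i c
      simp only [Matrix.submatrix_apply, Fin.revPerm_apply, Fin.rev_succ, Fin.rev_castSucc, B,
        Matrix.of_apply, if_neg (Fin.castSucc_lt_last _).ne]
      simp only [tailMat, Matrix.of_apply]
      rw [tailSer_rec]
      congr 3
      simp only [Fin.val_succ, Fin.val_castSucc]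
      push_cast
      ring
  have h2 : ∀ c : Fin (r+1), B (Fin.last (r+1)) c.castSucc = 0 := by
    intro c
    simp only [B, Matrix.of_apply, if_neg (Fin.castSucc_lt_last _).ne]
    rw [padP_last, hZF_of_neg, map_zero]
    have := c.2
    rw [Fin.val_last, Fin.val_castSucc]
    push_cast
    omega
  have h3 : B (Fin.last (r+1)) (Fin.last (r+1)) = tailSer 0 := by
    simp only [B, Matrix.of_apply, if_true, tailMat, padP_last]
    congr 1
    push_cast
    ring
  have h4 : (B.submatrix (Fin.last (r+1)).succAbove (Fin.last (r+1)).succAbove).det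
      = PowerSeries.C (schurF fun i => (p i : ℤ)) := by
    rw [schurF, RingHom.map_det]
    congr 1
    ext1 i c
    simp only [Matrix.submatrix_apply, Fin.succAbove_last, B, Matrix.of_apply,
      if_neg (Fin.castSucc_lt_last _).ne, padP_castSucc, Fin.val_castSucc,
      RingHom.mapMatrix_apply, Matrix.map_apply]
  rw [h1, Matrix.det_succ_row B (Fin.last (r+1)), Fin.sum_univ_castSucc, Finset.sum_eq_zero, h3,
    h4, zero_add, ← two_mul, pow_mul]
  · simp
  · intro c _
    rw [h2]
    simp

/-- The matrix whose `i`-th row is the part of the row of `tailMat p` with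
`p_i ≤ λ_i ≤ ubP p j i`. -/
def stripMat {r : ℕ} (p : Fin (r+1) → ℕ) (j : ℕ) :
    Matrix (Fin (r+2)) (Fin (r+2)) (PowerSeries LamF) :=
  Matrix.of fun i c => ∑ v ∈ Finset.Icc (padP p i) (ubP p j i),
    PowerSeries.X ^ (v - padP p i) * PowerSeries.C (hZF ((v : ℤ) - (i.1 : ℤ) + (c.1 : ℤ)))

/-- The terms of row `i+1` of `tailMat p` with `λ_{i+1} > p_i` form a multiple of row `i`, so they
do not contribute to the determinant; the terms of row `0` with `λ_0 > p_0 + j` are divisible by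
`t^{j+1}`. -/
lemma coeff_det_tailMat {r : ℕ} (p : Fin (r+1) → ℕ) (hp : Antitone p) (j : ℕ) :
    PowerSeries.coeff j (tailMat p).det = PowerSeries.coeff j (stripMat p j).det := by
  have hrow : ∀ i c, padP p i ≤ ubP p j i → tailMat p i c = stripMat p j i c +
      PowerSeries.X ^ (ubP p j i + 1 - padP p i) *
        tailSer ((ubP p j i : ℤ) + 1 - (i.1 : ℤ) + (c.1 : ℤ)) := by
    intro i c hi
    simp only [tailMat, stripMat, Matrix.of_apply]
    have h := tailSer_split (-(i.1 : ℤ) + (c.1 : ℤ)) _ _ hi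
    rw [show (padP p i : ℤ) - (i.1 : ℤ) + (c.1 : ℤ) = -(i.1 : ℤ) + (c.1 : ℤ) + padP p i by ring, h]
    refine congrArg₂ (· + ·) (Finset.sum_congr rfl fun v _ => ?_) ?_
    · rw [show (v : ℤ) - (i.1 : ℤ) + (c.1 : ℤ) = -(i.1 : ℤ) + (c.1 : ℤ) + v by ring]
    · rw [show (ubP p j i : ℤ) + 1 - (i.1 : ℤ) + (c.1 : ℤ)
        = -(i.1 : ℤ) + (c.1 : ℤ) + (ubP p j i + 1 : ℕ) by push_cast; ring]
  let T : Matrix (Fin (r+2)) (Fin (r+2)) (PowerSeries LamF) :=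
    Matrix.of (Fin.cons (tailMat p 0) fun i => stripMat p j i.succ)
  have h1 : (tailMat p).det = T.det := by
    refine Matrix.det_eq_of_forall_row_eq_smul_add_pred
      (fun i => PowerSeries.X ^ (p i + 1 - padP p i.succ)) ?_ ?_
    · intro c
      rfl
    · intro i c
      rw [hrow i.succ c (padP_succ_le hp i)]
      change stripMat p j i.succ c + _ = stripMat p j i.succ c + _
      rw [ubP_succ]
      simp only [tailMat, Matrix.of_apply]
      rw [padP_castSucc]
      rw [show (p i : ℤ) + 1 - ((i.succ.1 : ℕ) : ℤ) + (c.1 : ℤ)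
        = (p i : ℤ) - ((i.castSucc.1 : ℕ) : ℤ) + (c.1 : ℤ) by
          simp only [Fin.val_succ, Fin.val_castSucc]
          push_cast
          ring]
  rw [h1, Matrix.det_succ_row_zero, Matrix.det_succ_row_zero, map_sum, map_sum]
  refine Finset.sum_congr rfl fun c _ => ?_
  have h2 : T.submatrix Fin.succ c.succAbove = (stripMat p j).submatrix Fin.succ c.succAbove := rfl
  have h3 : T 0 c = tailMat p 0 c := rfl
  have h0 : padP p 0 ≤ ubP p j 0 := by rw [padP_zero, ubP_zero]; omega
  rw [h2, h3, hrow 0 c h0, mul_add, add_mul, map_add, padP_zero, ubP_zero,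
    show p 0 + j + 1 - p 0 = j + 1 by omega]
  have h5 : ∀ a b d : PowerSeries LamF,
      PowerSeries.coeff j (a * (PowerSeries.X ^ (j+1) * b) * d) = 0 := by
    intro a b d
    rw [show a * (PowerSeries.X ^ (j+1) * b) * d = PowerSeries.X ^ (j+1) * (a * b * d) by ring,
      PowerSeries.coeff_X_pow_mul', if_neg (by omega)]
  rw [h5, add_zero]

lemma det_stripMat {r : ℕ} (p : Fin (r+1) → ℕ) (j : ℕ) :
    (stripMat p j).det = ∑ lam ∈ Fintype.piFinset fun i => Finset.Icc (padP p i) (ubP p j i),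
      PowerSeries.X ^ (∑ i, (lam i - padP p i)) *
        PowerSeries.C (schurF fun i => (lam i : ℤ)) := by
  have h := MultilinearMap.map_sum_finset
    (Matrix.detRowAlternating (n := Fin (r+2)) (R := PowerSeries LamF)).toMultilinearMap
    (fun i (v : ℕ) => fun c : Fin (r+2) => (PowerSeries.X ^ (v - padP p i) *
      PowerSeries.C (hZF ((v : ℤ) - (i.1 : ℤ) + (c.1 : ℤ))) : PowerSeries LamF))
    (fun i => Finset.Icc (padP p i) (ubP p j i))
  have h1 : stripMat p j = fun i => ∑ v ∈ Finset.Icc (padP p i) (ubP p j i),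
      fun c : Fin (r+2) => (PowerSeries.X ^ (v - padP p i) *
        PowerSeries.C (hZF ((v : ℤ) - (i.1 : ℤ) + (c.1 : ℤ))) : PowerSeries LamF) := by
    funext i c
    rw [Finset.sum_apply]
    rfl
  rw [h1]
  refine Eq.trans h (Finset.sum_congr rfl fun lam _ => ?_)
  rw [← Finset.prod_pow_eq_pow_sum, schurF, RingHom.map_det, ← Matrix.det_mul_column]
  rfl

lemma pieri {r : ℕ} (p : Fin (r+1) → ℕ) (hp : Antitone p) (j : ℕ) :
    hhF j * schurF (fun i => (p i : ℤ)) =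
      ∑ lam ∈ (Fintype.piFinset fun i => Finset.Icc (padP p i) (ubP p j i)).filter
        (fun lam => ∑ i, (lam i - padP p i) = j), schurF fun i => (lam i : ℤ) := by
  have h := coeff_det_tailMat p hp j
  rw [det_tailMat, PowerSeries.coeff_mul_C, det_stripMat, map_sum] at h
  have h0 : PowerSeries.coeff j (tailSer 0) = hhF j := by
    rw [tailSer, PowerSeries.coeff_mk, zero_add, hZF_natCast]
  rw [h0] at h
  rw [h, Finset.sum_filter]
  refine Finset.sum_congr rfl fun lam _ => ?_
  rw [PowerSeries.coeff_mul_C, PowerSeries.coeff_X_pow]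
  simp [eq_comm]

/-! ### Horizontal strips as interlacing -/

lemma conjT_le_iff {r : ℕ} (p : Fin (r+1) → ℕ) (lam : Fin (r+2) → ℕ) (hp : Antitone p)
    (hl : Antitone lam) :
    (∀ c : ℕ, conjT (fun i => (lam i : ℤ)) c ≤ conjT (fun i => (p i : ℤ)) c + 1) ↔
      ∀ i, lam i.succ ≤ p i := by
  constructor
  · intro h i
    by_contra hlt
    push Not at hlt
    have h1 := h (p i)
    have h2 : Finset.Iic i.succ ⊆
        Finset.univ.filter fun k : Fin (r+2) => ((p i : ℕ) : ℤ) + 1 ≤ (lam k : ℤ) := by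
      intro k hk
      have := hl (Finset.mem_Iic.mp hk)
      simp only [Finset.mem_filter, Finset.mem_univ, true_and]
      omega
    have h3 : (Finset.univ.filter fun k : Fin (r+1) => ((p i : ℕ) : ℤ) + 1 ≤ (p k : ℤ))
        ⊆ Finset.Iio i := by
      intro k hk
      simp only [Finset.mem_filter, Finset.mem_univ, true_and] at hk
      rw [Finset.mem_Iio]
      by_contra hki
      have := hp (not_lt.mp hki)
      omega
    have h4 := Finset.card_le_card h2
    have h5 := Finset.card_le_card h3
    rw [Fin.card_Iic, Fin.val_succ] at h4
    rw [Fin.card_Iio] at h5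
    simp only [conjT] at h1
    omega
  · intro h c
    have h1 : (Finset.univ.filter fun k : Fin (r+2) => (c : ℤ) + 1 ≤ (lam k : ℤ)) ⊆
        insert 0 ((Finset.univ.filter fun k : Fin (r+1) => (c : ℤ) + 1 ≤ (p k : ℤ)).image
          Fin.succ) := by
      intro k hk
      rw [Finset.mem_insert]
      induction k using Fin.cases with
      | zero => exact Or.inl rfl
      | succ k =>
        refine Or.inr (Finset.mem_image_of_mem _ ?_)
        simp only [Finset.mem_filter, Finset.mem_univ, true_and] at hk ⊢
        have := h k
        omega
    have h2 := (Finset.card_le_card h1).trans ((Finset.card_insert_le _ _).trans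
      (Nat.add_le_add_right Finset.card_image_le 1))
    simp only [conjT]
    exact_mod_cast h2

lemma hstrip_iff {r : ℕ} (p : Fin (r+1) → ℕ) (hp : Antitone p) (lam : Fin (r+2) → ℕ) (j : ℕ) :
    (Antitone lam ∧ HStrip (fun i => (p i : ℤ)) lam j) ↔
      (∀ i, padP p i ≤ lam i ∧ lam i ≤ ubP p j i) ∧ ∑ i, (lam i - padP p i) = j := by
  have hpad : (∀ t : ℕ, padZ (fun i => (p i : ℤ)) t ≤ padZ (fun i => (lam i : ℤ)) t) ↔
      ∀ i, padP p i ≤ lam i := by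
    constructor
    · intro h i
      induction i using Fin.lastCases with
      | last => rw [padP_last]; exact Nat.zero_le _
      | cast i =>
        have h1 := h i.1
        rw [padZ, padZ, dif_pos i.2, dif_pos (by omega)] at h1
        rw [padP_castSucc]
        exact_mod_cast h1
    · intro h t
      by_cases ht : t < r + 1
      · rw [padZ, padZ, dif_pos ht, dif_pos (by omega)]
        have h1 := h (Fin.castSucc ⟨t, ht⟩)
        rw [padP_castSucc] at h1
        exact_mod_cast h1
      · rw [padZ, dif_neg ht, padZ]
        split_ifs <;> simp
  have hsum : (∀ i, padP p i ≤ lam i) →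
      ((∑ i, (lam i : ℤ)) = (∑ i, (p i : ℤ)) + j ↔ ∑ i, (lam i - padP p i) = j) := by
    intro h
    have h1 : ((∑ i, (lam i - padP p i) : ℕ) : ℤ) = (∑ i, (lam i : ℤ)) - ∑ i, (p i : ℤ) := by
      rw [Nat.cast_sum, Finset.sum_congr rfl fun i _ => Nat.cast_sub (h i),
        Finset.sum_sub_distrib, Fin.sum_univ_castSucc (fun i => (padP p i : ℤ)), padP_last]
      simp [padP_castSucc]
    omega
  constructor
  · rintro ⟨hl, h1, h2, h3⟩
    have h1' := hpad.mp h1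
    have h2' := (hsum h1').mp h2
    refine ⟨fun i => ⟨h1' i, ?_⟩, h2'⟩
    induction i using Fin.cases with
    | zero =>
      have h4 := Finset.single_le_sum (f := fun i => lam i - padP p i)
        (fun _ _ => Nat.zero_le _) (Finset.mem_univ 0)
      simp only [h2', padP_zero] at h4
      rw [ubP_zero]
      omega
    | succ i => exact (conjT_le_iff p lam hp hl).mp h3 i
  · rintro ⟨h1, h2⟩
    have hl : Antitone lam := by
      refine Fin.antitone_iff_succ_le.mpr fun i => ?_
      have h3 := (h1 i.succ).2
      have h4 := (h1 i.castSucc).1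
      rw [ubP_succ] at h3
      rw [padP_castSucc] at h4
      omega
    exact ⟨hl, hpad.mpr fun i => (h1 i).1, (hsum fun i => (h1 i).1).mpr h2,
      (conjT_le_iff p lam hp hl).mpr fun i => (h1 i.succ).2⟩

lemma hhF_mul_schurF {r : ℕ} (ν : Fin (r+1) → ℤ) (j : ℕ) :
    (sgnT ν : Fq) • (∑ᶠ (lam : Fin (r+2) → ℕ)
        (_ : Antitone lam ∧ IsPartitionT (piT ν) ∧ HStrip (piT ν) lam j),
          schurF fun k => (lam k : ℤ)) = hhF j * schurF ν := by
  rw [schurF_straighten ν, mul_smul_comm]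
  congr 1
  have ha := piT_antitone ν
  generalize piT ν = π at ha
  by_cases hπ : IsPartitionT π
  · obtain ⟨p, rfl⟩ : ∃ p : Fin (r+1) → ℕ, π = fun i => (p i : ℤ) :=
      ⟨fun i => (π i).toNat, funext fun i => (Int.toNat_of_nonneg (hπ.2 i)).symm⟩
    have hp : Antitone p := fun a b hab => Int.ofNat_le.mp (ha hab)
    rw [pieri p hp j]
    refine finsum_cond_eq_sum_of_cond_iff _ fun {lam} _ => ?_
    rw [Finset.mem_filter, Fintype.mem_piFinset]
    simp only [Finset.mem_Icc]
    rw [← hstrip_iff p hp lam j]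
    exact ⟨fun h => ⟨h.1, h.2.2⟩, fun h => ⟨h.1, hπ, h.2⟩⟩
  · rw [schurF_eq_zero_of_not_partition π ha hπ, mul_zero]
    simp [hπ]

/-- action of `X_n^+` on the Schur basis via horizontal strips.  For a
partition `μ` of length `l`, `m, n ∈ ℤ`, `i ∈ {0,1}` and `a_j := −2m−n−1−i−j`:
`X_n^+ (s_μ e^{mα}e^{iα/2})
  = (∑_{j≥0} q^{−2m−n−1−i−2j} · sgn((a_j,μ)) · ∑_λ s_λ) e^{(m+1)α}e^{iα/2}`,
where the inner sum is over all partitions `λ` (represented as weakly decreasing tuples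
in `ℕ^{l+2}`) such that `π((a_j,μ))` is a partition and `λ − π((a_j,μ))` is a horizontal
`j`-strip (only finitely many `j` contribute).  Equivalently,
`X_n^+ (s_μ e^{mα}e^{iα/2}) = ∑_{j≥0} q^{−2m−n−1−i−2j}·h_j·s_{(a_j,μ)}·e^{(m+1)α}e^{iα/2}`. -/
theorem Xplus_on_schur_basis (l : ℕ) (mu : Fin l → ℕ) (hmu : Antitone mu)
    (hmu1 : ∀ k, 1 ≤ mu k) (m n i : ℤ) (hi : i = 0 ∨ i = 1) :
    (Xp i n (Finsupp.single m (schurF fun k => (mu k : ℤ)))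
      = Finsupp.single (m+1)
          (∑ᶠ j : ℕ,
            qq ^ (-2*m - n - 1 - i - 2*(j : ℤ)) •
              ((sgnT (Fin.cons (-2*m - n - 1 - i - (j : ℤ)) fun k => (mu k : ℤ)) : Fq) •
                ∑ᶠ (lam : Fin (l+2) → ℕ)
                  (_ : Antitone lam ∧
                    IsPartitionT (piT (Fin.cons (-2*m - n - 1 - i - (j : ℤ))
                        fun k => (mu k : ℤ))) ∧
                    HStrip (piT (Fin.cons (-2*m - n - 1 - i - (j : ℤ))
                        fun k => (mu k : ℤ))) lam j),
                  schurF fun k => (lam k : ℤ)))) ∧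
    (Xp i n (Finsupp.single m (schurF fun k => (mu k : ℤ)))
      = Finsupp.single (m+1)
          (∑ᶠ j : ℕ,
            qq ^ (-2*m - n - 1 - i - 2*(j : ℤ)) •
              (hhF j *
                schurF (Fin.cons (-2*m - n - 1 - i - (j : ℤ)) fun k => (mu k : ℤ))))) := by
  refine ⟨?_, Xp_single_schurF _ m n i⟩
  rw [Xp_single_schurF]
  congr 1
  refine finsum_congr fun j => ?_
  rw [hhF_mul_schurF]
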